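/- For every p > 0 there exist a Borel probability measure μ on ℝ with μ(ℝ \ 𝕃) = 0 and constants C > 0, M > e such that |μ̂(ξ)| ≤ C·(log|ξ|)^(−p) for all ξ ∈ ℝ with |ξ| ≥ M. -/

import Mathlib

open MeasureTheory Filter Set

/-- The Fourier transform of a measure on `ℝ`: `μ̂(ξ) = ∫ e^(−2πiξx) dμ(x)`. -/
noncomputable def fourierT (μ : Measure ℝ) (ξ : ℝ) : ℂ :=
  ∫ x, Complex.exp (((-2 * Real.pi * ξ * x : ℝ) : ℂ) * Complex.I) ∂μ

/-! Let `μ` be the law of `∑ aⱼ / (Aⱼ qⱼ)`, where the `qⱼ` are independent uniform primes `≤ Nⱼ` and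
`aⱼ` is uniform in `{1, …, qⱼ}`. The scales `Aⱼ` grow so fast that the tail of the series after the
`n`-th term is less than `b ^ (-n)`, where `b` is the product of the denominators `Aᵢ qᵢ` up to
that term; so the sum is a Liouville number.

By independence `|μ̂(ξ)|` is at most the contribution of any single term. For
`Aⱼ² ≤ |ξ| ≤ Aⱼ₊₁²` take the `j`-th one: its average over `aⱼ` is a geometric sum, of size
`O(1 / K)` unless `qⱼ` divides an integer within `K` of `ξ / Aⱼ`. There are at most `2K + 1` such
integers, each with `O(log |ξ|)` prime divisors, which is negligible among the `π(Nⱼ)` primes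
available as soon as `π(Nⱼ) ≥ (log |ξ|) ^ (2p + 1)`; then `K = (log |ξ|) ^ p` gives the bound.
Chebyshev's estimate provides such an `Nⱼ` although `Aⱼ₊₁`, and hence the range of `ξ`, depends on
`Nⱼ`, because `log Aⱼ₊₁` is only `O(log Nⱼ)` for fixed `Aⱼ` and `j`. -/

open Asymptotics ProbabilityTheory
open scoped ENNReal FourierTransform Topology

theorem four_mul_abs_sub_round_le_norm_fourierChar_sub_one (x : ℝ) :
    4 * |x - round x| ≤ ‖(𝐞 x : ℂ) - 1‖ := by
  have norm_eq : ‖(𝐞 x : ℂ) - 1‖ = 2 * |Real.sin (Real.pi * (x - round x))| := by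
    rw [Real.fourierChar_apply, mul_comm, Complex.norm_exp_I_mul_ofReal_sub_one, norm_mul,
      mul_sub, mul_comm Real.pi (round x : ℝ), Real.sin_sub_int_mul_pi, abs_mul, abs_neg_one_zpow,
      one_mul, mul_assoc 2 Real.pi x, mul_div_cancel_left₀ _ (two_ne_zero' ℝ), Real.norm_eq_abs,
      Real.norm_eq_abs, abs_two]
  have abs_eq : |Real.pi * (x - round x)| = Real.pi * |x - round x| := by
    rw [abs_mul, abs_of_pos Real.pi_pos]
  have jordan : 2 / Real.pi * |Real.pi * (x - round x)| ≤ |Real.sin (Real.pi * (x - round x))| :=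
    Real.mul_abs_le_abs_sin <| by nlinarith [abs_sub_round x, Real.pi_pos]
  rw [abs_eq, ← mul_assoc, div_mul_cancel₀ _ Real.pi_ne_zero] at jordan
  linarith

theorem abs_sub_round_mul_norm_sum_fourierChar_le (q : ℕ) (x : ℝ) :
    |x - round x| * ‖∑ a ∈ Finset.Icc 1 q, (𝐞 (a * x) : ℂ)‖ ≤ 1 / 2 := by
  have geom : (∑ a ∈ Finset.Icc 1 q, (𝐞 (a * x) : ℂ)) * (𝐞 x - 1) = 𝐞 x ^ (q + 1) - 𝐞 x ^ 1 := by
    rw [← geom_sum_Ico_mul (𝐞 x : ℂ) (Nat.le_add_left 1 q), Finset.Ico_add_one_right_eq_Icc]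
    simp_rw [← nsmul_eq_mul, AddChar.map_nsmul_eq_pow, Circle.coe_pow]
  have norm_le : ‖∑ a ∈ Finset.Icc 1 q, (𝐞 (a * x) : ℂ)‖ * ‖(𝐞 x : ℂ) - 1‖ ≤ 1 + 1 := by
    rw [← norm_mul, geom]
    exact (norm_sub_le _ _).trans_eq (by simp only [norm_pow, Circle.norm_coe, one_pow])
  nlinarith [four_mul_abs_sub_round_le_norm_fourierChar_sub_one x,
    norm_nonneg (∑ a ∈ Finset.Icc 1 q, (𝐞 (a * x) : ℂ))]

theorem fourierT_eq_integral_fourierChar (μ : Measure ℝ) (ξ : ℝ) :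
    fourierT μ ξ = ∫ x, (𝐞 (-(ξ * x)) : ℂ) ∂μ := by
  refine integral_congr_ae (.of_forall fun x => ?_)
  simp only [Real.fourierChar_apply]
  congr 3
  ring

theorem fourierT_eq_charFun (μ : Measure ℝ) (ξ : ℝ) :
    fourierT μ ξ = charFun μ (-2 * Real.pi * ξ) := by
  simp only [fourierT, charFun_apply_real, Complex.ofReal_mul]

theorem fourierT_dirac (x ξ : ℝ) : fourierT (Measure.dirac x) ξ = 𝐞 (-(ξ * x)) := by
  rw [fourierT_eq_integral_fourierChar, integral_dirac]

theorem norm_fourierT_le_one (μ : Measure ℝ) [IsProbabilityMeasure μ] (ξ : ℝ) :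
    ‖fourierT μ ξ‖ ≤ 1 := by
  rw [fourierT_eq_charFun]
  exact norm_charFun_le_one _

/-- The uniform mixture of a finite family of measures: the law of a random variable obtained by
first picking `i ∈ s` uniformly and then sampling from `μ i`. It is the zero measure when `s` is
empty. -/
noncomputable def uniformMixture {ι Ω : Type*} [MeasurableSpace Ω] (s : Finset ι)
    (μ : ι → Measure Ω) : Measure Ω :=
  (s.card : ℝ≥0∞)⁻¹ • ∑ i ∈ s, μ i

section UniformMixture

variable {ι Ω : Type*} [MeasurableSpace Ω] {s : Finset ι} {μ : ι → Measure Ω}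

theorem isProbabilityMeasure_uniformMixture (hs : s.Nonempty)
    (hμ : ∀ i ∈ s, IsProbabilityMeasure (μ i)) : IsProbabilityMeasure (uniformMixture s μ) where
  measure_univ := by
    have sum_eq : ∑ i ∈ s, μ i univ = s.card := by
      rw [Finset.sum_congr rfl fun i hi => (hμ i hi).measure_univ, Finset.sum_const, nsmul_one]
    rw [uniformMixture, Measure.smul_apply, Measure.finsetSum_apply, sum_eq, smul_eq_mul]
    exact ENNReal.inv_mul_cancel (by exact_mod_cast hs.card_ne_zero) (ENNReal.natCast_ne_top _)

theorem ae_uniformMixture {P : Ω → Prop} (h : ∀ i ∈ s, ∀ᵐ x ∂μ i, P x) :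
    ∀ᵐ x ∂uniformMixture s μ, P x :=
  Measure.ae_smul_measure (ae_finsetSum_measure_iff.2 h) _

end UniformMixture

theorem fourierT_uniformMixture {ι : Type*} {s : Finset ι} {μ : ι → Measure ℝ}
    (hμ : ∀ i ∈ s, IsFiniteMeasure (μ i)) (ξ : ℝ) :
    fourierT (uniformMixture s μ) ξ = (s.card : ℂ)⁻¹ * ∑ i ∈ s, fourierT (μ i) ξ := by
  have integrable : ∀ i ∈ s, Integrable (fun x : ℝ => (𝐞 (-(ξ * x)) : ℂ)) (μ i) := fun i hi =>
    have := hμ i hi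
    .of_bound (by fun_prop) 1 (.of_forall fun x => (Circle.norm_coe _).le)
  simp_rw [fourierT_eq_integral_fourierChar]
  rw [uniformMixture, integral_smul_measure, integral_finsetSum_measure integrable,
    ENNReal.toReal_inv, ENNReal.toReal_natCast, Complex.real_smul, Complex.ofReal_inv,
    Complex.ofReal_natCast]

/-- The uniform distribution on the fractions `a / (A * q)` with `1 ≤ a ≤ q`. -/
noncomputable def fractionLaw (A q : ℕ) : Measure ℝ :=
  uniformMixture (Finset.Icc 1 q) fun a => Measure.dirac (a / (A * q : ℕ))

theorem isProbabilityMeasure_fractionLaw (A : ℕ) {q : ℕ} (hq : 0 < q) :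
    IsProbabilityMeasure (fractionLaw A q) :=
  isProbabilityMeasure_uniformMixture (Finset.nonempty_Icc.2 hq) fun _ _ => inferInstance

theorem fourierT_fractionLaw (A q : ℕ) (ξ : ℝ) :
    fourierT (fractionLaw A q) ξ =
      (q : ℂ)⁻¹ * ∑ a ∈ Finset.Icc 1 q, (𝐞 (a * -(ξ / A / q)) : ℂ) := by
  rw [fractionLaw, fourierT_uniformMixture fun _ _ => inferInstance, Nat.card_Icc,
    Nat.add_sub_cancel]
  refine congrArg _ (Finset.sum_congr rfl fun a _ => ?_)
  rw [fourierT_dirac, Nat.cast_mul]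
  congr 2
  ring

theorem norm_fourierT_fractionLaw_le {A q : ℕ} (hq : 0 < q) {ξ K : ℝ} (hK : 0 < K)
    (h : ∀ m : ℤ, (q : ℤ) ∣ m → K ≤ |ξ / A - m|) :
    ‖fourierT (fractionLaw A q) ξ‖ ≤ 1 / (2 * K) := by
  have hq' : (0 : ℝ) < q := by exact_mod_cast hq
  set x := -(ξ / A / q) with hx
  have hKx : K ≤ q * |x - round x| := by
    refine (h (-(q * round x)) (by simp)).trans_eq ?_
    rw [← abs_neg, ← abs_of_pos hq', ← abs_mul, hx]
    push_cast
    congr 1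
    field_simp
    ring
  have hsum := abs_sub_round_mul_norm_sum_fourierChar_le q x
  rw [fourierT_fractionLaw, norm_mul, norm_inv, Complex.norm_natCast, inv_mul_le_iff₀ hq',
    mul_one_div, le_div_iff₀ (by positivity)]
  nlinarith [norm_nonneg (∑ a ∈ Finset.Icc 1 q, (𝐞 (a * x) : ℂ))]

/-- The law of a random fraction `a / (A * q)`, where `q` is a uniform prime `≤ N` and, given `q`,
the numerator `a` is uniform in `{1, …, q}`. -/
noncomputable def primeFractionLaw (A N : ℕ) : Measure ℝ :=
  uniformMixture N.primesLE fun q => fractionLaw A q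

theorem isProbabilityMeasure_primeFractionLaw (A : ℕ) {N : ℕ} (hN : 2 ≤ N) :
    IsProbabilityMeasure (primeFractionLaw A N) :=
  isProbabilityMeasure_uniformMixture ⟨2, Nat.mem_primesLE.2 ⟨hN, Nat.prime_two⟩⟩ fun _ hq =>
    isProbabilityMeasure_fractionLaw A (Nat.prime_of_mem_primesLE hq).pos

theorem ae_primeFractionLaw (A N : ℕ) : ∀ᵐ y : ℝ ∂primeFractionLaw A N,
    ∃ a q : ℕ, 0 < a ∧ a ≤ q ∧ q ≤ N ∧ y = a / (A * q : ℕ) := by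
  refine ae_uniformMixture fun q hq => ?_
  refine ae_uniformMixture fun a ha => ?_
  obtain ⟨ha₀, haq⟩ := Finset.mem_Icc.1 ha
  rw [ae_dirac_eq]
  exact ⟨a, q, ha₀, haq, Nat.le_of_mem_primesLE hq, rfl⟩

theorem card_filter_prime_dvd_le_logb {P : Finset ℕ} (hP : ∀ q ∈ P, q.Prime) {m : ℤ} (hm : m ≠ 0) :
    ((P.filter fun q : ℕ => (q : ℤ) ∣ m).card : ℝ) ≤ Real.logb 2 |(m : ℝ)| := by
  set S := P.filter fun q : ℕ => (q : ℤ) ∣ m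
  have prime_of_mem : ∀ q ∈ S, q.Prime := fun q hq => hP q (Finset.mem_filter.1 hq).1
  have prod_dvd : ∏ q ∈ S, q ∣ m.natAbs := Finset.prod_primes_dvd _
    (fun q hq => (prime_of_mem q hq).prime) fun q hq => Int.natCast_dvd.1 (Finset.mem_filter.1 hq).2
  have two_pow_le : 2 ^ S.card ≤ m.natAbs :=
    (Finset.pow_card_le_prod _ _ _ fun q hq => (prime_of_mem q hq).two_le).trans
      (Nat.le_of_dvd (Int.natAbs_pos.2 hm) prod_dvd)
  rw [Real.le_logb_iff_rpow_le one_lt_two (by positivity), Real.rpow_natCast, ← Int.cast_abs,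
    Int.abs_eq_natAbs]
  exact_mod_cast two_pow_le

theorem card_filter_exists_mem_prime_dvd_le {P : Finset ℕ} (hP : ∀ q ∈ P, q.Prime) {I : Finset ℤ}
    {X : ℝ} (hI : ∀ m ∈ I, m ≠ 0 ∧ |(m : ℝ)| ≤ X) :
    ((P.filter fun q : ℕ => ∃ m ∈ I, (q : ℤ) ∣ m).card : ℝ) ≤ I.card * Real.logb 2 X := by
  have dvd_le : ∀ m ∈ I, ((P.filter fun q : ℕ => (q : ℤ) ∣ m).card : ℝ) ≤ Real.logb 2 X :=
    fun m hm => (card_filter_prime_dvd_le_logb hP (hI m hm).1).trans <|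
      Real.logb_le_logb_of_le one_lt_two (abs_pos.2 (Int.cast_ne_zero.2 (hI m hm).1)) (hI m hm).2
  have subset : (P.filter fun q : ℕ => ∃ m ∈ I, (q : ℤ) ∣ m) ⊆
      I.biUnion fun m => P.filter fun q : ℕ => (q : ℤ) ∣ m := by
    grind
  calc ((P.filter fun q : ℕ => ∃ m ∈ I, (q : ℤ) ∣ m).card : ℝ)
      ≤ ∑ m ∈ I, ((P.filter fun q : ℕ => (q : ℤ) ∣ m).card : ℝ) := by
        exact_mod_cast (Finset.card_le_card subset).trans Finset.card_biUnion_le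
    _ ≤ I.card * Real.logb 2 X := by
        simpa only [nsmul_eq_mul] using Finset.sum_le_card_nsmul _ _ _ dvd_le

theorem mem_Icc_ceil_sub_floor_add {t K : ℝ} {m : ℤ} :
    m ∈ Finset.Icc ⌈t - K⌉ ⌊t + K⌋ ↔ |t - m| ≤ K := by
  rw [Finset.mem_Icc, Int.ceil_le, Int.le_floor, abs_le]
  constructor <;> rintro ⟨_, _⟩ <;> constructor <;> linarith

theorem card_Icc_ceil_sub_floor_add_le {K : ℝ} (hK : 0 ≤ K) (t : ℝ) :
    ((Finset.Icc ⌈t - K⌉ ⌊t + K⌋).card : ℝ) ≤ 2 * K + 1 := by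
  rw [Int.card_Icc, ← Int.cast_natCast, Int.toNat_eq_max, Int.cast_max, max_le_iff]
  push_cast
  constructor <;> linarith [Int.floor_le (t + K), Int.le_ceil (t - K)]

theorem card_filter_prime_dvd_near_le {P : Finset ℕ} (hP : ∀ q ∈ P, q.Prime) {t K : ℝ}
    (hK : 1 ≤ K) (hKt : K < |t|) :
    ((P.filter fun q : ℕ => ∃ m ∈ Finset.Icc ⌈t - K⌉ ⌊t + K⌋, (q : ℤ) ∣ m).card : ℝ) ≤
      (2 * K + 1) * Real.logb 2 (|t| + K) := by
  have ne_zero_and_abs_le : ∀ m ∈ Finset.Icc ⌈t - K⌉ ⌊t + K⌋, m ≠ 0 ∧ |(m : ℝ)| ≤ |t| + K := by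
    intro m hm
    have near := mem_Icc_ceil_sub_floor_add.1 hm
    refine ⟨?_, by linarith [abs_sub_abs_le_abs_sub (m : ℝ) t, abs_sub_comm t m]⟩
    rintro rfl
    rw [Int.cast_zero, sub_zero] at near
    exact hKt.not_ge near
  have logb_nonneg : 0 ≤ Real.logb 2 (|t| + K) := Real.logb_nonneg one_lt_two (by linarith)
  refine (card_filter_exists_mem_prime_dvd_le hP ne_zero_and_abs_le).trans ?_
  gcongr
  exact card_Icc_ceil_sub_floor_add_le (by linarith) t

theorem norm_fourierT_primeFractionLaw_le {A N : ℕ} (hN : 2 ≤ N) {ξ K : ℝ} (hK : 1 ≤ K)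
    (hKξ : K < |ξ / A|) :
    ‖fourierT (primeFractionLaw A N) ξ‖ ≤
      1 / (2 * K) + (2 * K + 1) * Real.logb 2 (|ξ / A| + K) / N.primeCounting := by
  have isProb : ∀ q ∈ N.primesLE, IsProbabilityMeasure (fractionLaw A q) := fun q hq =>
    isProbabilityMeasure_fractionLaw A (Nat.prime_of_mem_primesLE hq).pos
  have card_pos : (0 : ℝ) < N.primesLE.card := by
    exact_mod_cast Finset.card_pos.2 ⟨2, Nat.mem_primesLE.2 ⟨hN, Nat.prime_two⟩⟩
  have norm_le : ∀ q ∈ N.primesLE, ‖fourierT (fractionLaw A q) ξ‖ ≤ 1 / (2 * K) +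
      if ∃ m ∈ Finset.Icc ⌈ξ / A - K⌉ ⌊ξ / A + K⌋, (q : ℤ) ∣ m then 1 else 0 := fun q hq => by
    split_ifs with near
    · have := isProb q hq
      exact (norm_fourierT_le_one _ ξ).trans (le_add_of_nonneg_left (by positivity))
    · rw [add_zero]
      refine norm_fourierT_fractionLaw_le (Nat.prime_of_mem_primesLE hq).pos (by linarith) ?_
      intro m hqm
      by_contra! hm
      exact near ⟨m, mem_Icc_ceil_sub_floor_add.2 hm.le, hqm⟩
  have norm_sum_le : ‖∑ q ∈ N.primesLE, fourierT (fractionLaw A q) ξ‖ ≤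
      N.primesLE.card * (1 / (2 * K)) + (2 * K + 1) * Real.logb 2 (|ξ / A| + K) := by
    refine (norm_sum_le_of_le _ norm_le).trans ?_
    rw [Finset.sum_add_distrib, Finset.sum_const, nsmul_eq_mul, Finset.sum_boole]
    gcongr
    exact card_filter_prime_dvd_near_le (fun q => Nat.prime_of_mem_primesLE) hK hKξ
  rw [primeFractionLaw, fourierT_uniformMixture fun q hq => have := isProb q hq; inferInstance,
    norm_mul, norm_inv, Complex.norm_natCast, ← Nat.primesLE_card_eq_primeCounting,
    inv_mul_le_iff₀ card_pos]
  exact norm_sum_le.trans_eq (by field_simp)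

theorem isBigO_div_log_primeCounting :
    (fun n : ℕ => (n / Real.log n : ℝ)) =O[atTop] fun n : ℕ => (n.primeCounting : ℝ) := by
  have log_le : ∀ᶠ n : ℕ in atTop, ‖Real.log (n + 1)‖ ≤ 1 / 8 * ‖(n + 1 : ℝ)‖ :=
    (tendsto_atTop_add_const_right atTop (1 : ℝ) tendsto_natCast_atTop_atTop).eventually
      (Real.isLittleO_log_id_atTop.bound (by norm_num))
  refine .of_bound 8 ?_
  filter_upwards [log_le, eventually_ge_atTop 2] with n hlog hn
  have hn' : (2 : ℝ) ≤ n := by exact_mod_cast hn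
  have log_pos : 0 < Real.log n := Real.log_pos (by linarith)
  have key : (n : ℝ) ≤ 8 * (n * Real.log 2 - Real.log (n + 1)) := by
    rw [Real.norm_of_nonneg (by positivity : (0 : ℝ) ≤ n + 1)] at hlog
    nlinarith [(le_abs_self _).trans hlog, Real.log_two_gt_d9]
  calc ‖(n / Real.log n : ℝ)‖ = n / Real.log n := Real.norm_of_nonneg (by positivity)
    _ ≤ 8 * ((n * Real.log 2 - Real.log (n + 1)) / Real.log n) := by
      rw [← mul_div_assoc]
      gcongr
    _ ≤ 8 * ‖(n.primeCounting : ℝ)‖ := by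
      rw [Real.norm_natCast]
      gcongr
      exact Chebyshev.pi_ge n

theorem isLittleO_log_rpow_primeCounting (s : ℝ) :
    (fun n : ℕ => Real.log n ^ s) =o[atTop] fun n : ℕ => (n.primeCounting : ℝ) := by
  have log_pos : ∀ᶠ n : ℕ in atTop, 0 < Real.log n := by
    filter_upwards [eventually_gt_atTop 1] with n hn
    exact Real.log_pos (by exact_mod_cast hn)
  have isLittleO : (fun n : ℕ => Real.log n ^ (s + 1)) =o[atTop] fun n : ℕ => (n : ℝ) := by
    simpa only [Real.rpow_one] using (isLittleO_log_rpow_rpow_atTop (s + 1) one_pos).natCast_atTop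
  have h := isLittleO.mul_isBigO (isBigO_refl (fun n : ℕ => (Real.log n)⁻¹) atTop)
  refine IsLittleO.trans_isBigO ?_ isBigO_div_log_primeCounting
  refine h.congr' ?_ ?_
  · filter_upwards [log_pos] with n hn
    rw [Real.rpow_add_one hn.ne', mul_inv_cancel_right₀ hn.ne']
  · exact .of_forall fun n => (div_eq_mul_inv _ _).symm

theorem eventually_mul_log_rpow_le_primeCounting {s k : ℝ} (hs : 0 ≤ s) (hk : 0 ≤ k) (A : ℕ) :
    ∀ᶠ N : ℕ in atTop, (k * Real.log (A * N)) ^ s ≤ N.primeCounting := by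
  filter_upwards [((isLittleO_log_rpow_primeCounting s).const_mul_left ((k * 2) ^ s)).bound one_pos,
    eventually_ge_atTop (max A 1)] with N bound hAN
  have hAN' : (A : ℝ) ≤ N := by exact_mod_cast (le_max_left _ _).trans hAN
  have hN : (1 : ℝ) ≤ N := by exact_mod_cast (le_max_right _ _).trans hAN
  have log_le : Real.log (A * N) ≤ 2 * Real.log N := by
    rcases A.eq_zero_or_pos with rfl | hA
    · simpa using Real.log_nonneg hN
    · rw [two_mul, ← Real.log_mul (by positivity) (by positivity)]
      gcongr
  have log_nonneg : 0 ≤ Real.log (A * N) := by exact_mod_cast Real.log_natCast_nonneg (A * N)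
  calc (k * Real.log (A * N)) ^ s ≤ (k * (2 * Real.log N)) ^ s := by gcongr
    _ = (k * 2) ^ s * Real.log N ^ s := by
      rw [← mul_assoc, Real.mul_rpow (by positivity) (Real.log_nonneg hN)]
    _ ≤ N.primeCounting := by
      simpa only [one_mul, Real.norm_natCast] using (le_abs_self _).trans bound

/-- The denominator scales `A j` attached to a sequence of cutoffs `N`: `A 0 = 2` and
`A (j + 1) = (A j * N j) ^ (2 * (j + 2))`, so that the scales grow super-exponentially
however slowly `N` grows. -/
def scale (N : ℕ → ℕ) : ℕ → ℕ
  | 0 => 2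
  | j + 1 => (scale N j * N j) ^ (2 * (j + 2))

theorem exists_forall_scale {P : ℕ → ℕ → ℕ → Prop} (h : ∀ j a, ∃ n, P j a n) :
    ∃ N : ℕ → ℕ, ∀ j, P j (scale N j) (N j) := by
  choose f hf using h
  let A : ℕ → ℕ := Nat.rec 2 fun j a => (a * f j a) ^ (2 * (j + 2))
  have scale_eq : ∀ j, scale (fun j => f j (A j)) j = A j := fun j => by
    induction j with
    | zero => rfl
    | succ j ih => rw [scale, ih]
  refine ⟨fun j => f j (A j), fun j => ?_⟩
  rw [scale_eq]
  exact hf j (A j)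

theorem exists_log_scale_succ_rpow_le_primeCounting {s : ℝ} (hs : 0 ≤ s) : ∃ N : ℕ → ℕ,
    (∀ j, 2 ≤ N j) ∧ ∀ j, (2 * Real.log (scale N (j + 1))) ^ s ≤ (N j).primeCounting := by
  have exists_cutoff : ∀ j A : ℕ, ∃ N : ℕ,
      2 ≤ N ∧ (4 * (j + 2) * Real.log (A * N)) ^ s ≤ N.primeCounting := fun j A =>
    ((eventually_ge_atTop 2).and
      (eventually_mul_log_rpow_le_primeCounting hs (by positivity) A)).exists
  obtain ⟨N, hN⟩ := exists_forall_scale exists_cutoff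
  refine ⟨N, fun j => (hN j).1, fun j => (hN j).2.trans_eq' ?_⟩
  rw [scale, Nat.cast_pow, Real.log_pow]
  push_cast
  ring_nf

section Scale

variable {N : ℕ → ℕ}

theorem scale_mul_le_scale_succ (N : ℕ → ℕ) (j : ℕ) : scale N j * N j ≤ scale N (j + 1) :=
  Nat.le_self_pow (by omega) _

theorem scale_pos (hN : ∀ j, 0 < N j) : ∀ j, 0 < scale N j
  | 0 => two_pos
  | j + 1 => Nat.pow_pos (Nat.mul_pos (scale_pos hN j) (hN j))

theorem two_mul_scale_le_scale_succ (hN : ∀ j, 2 ≤ N j) (j : ℕ) :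
    2 * scale N j ≤ scale N (j + 1) := by
  nlinarith [scale_mul_le_scale_succ N j, hN j]

theorem strictMono_scale (hN : ∀ j, 2 ≤ N j) : StrictMono (scale N) :=
  strictMono_nat_of_lt_succ fun j => by
    linarith [two_mul_scale_le_scale_succ hN j, scale_pos (fun j => two_pos.trans_le (hN j)) j]

theorem prod_scale_mul_le_sq (hN : ∀ j, 0 < N j) (n : ℕ) :
    ∏ i ∈ Finset.range (n + 1), scale N i * N i ≤ (scale N n * N n) ^ 2 := by
  induction n with
  | zero => simpa using Nat.le_self_pow two_ne_zero (scale N 0 * N 0)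
  | succ n ih =>
    have sq_le : (scale N n * N n) ^ 2 ≤ scale N (n + 1) :=
      Nat.pow_le_pow_right (Nat.mul_pos (scale_pos hN n) (hN n)) (by omega)
    rw [Finset.prod_range_succ, sq (scale N (n + 1) * N (n + 1))]
    gcongr
    exact (ih.trans sq_le).trans (Nat.le_mul_of_pos_right _ (hN _))

theorem two_le_scale (hN : ∀ j, 2 ≤ N j) (j : ℕ) : 2 ≤ scale N j :=
  (strictMono_scale hN).monotone j.zero_le

theorem two_mul_prod_scale_mul_pow_lt (hN : ∀ j, 2 ≤ N j) (n : ℕ) :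
    2 * (∏ i ∈ Finset.range (n + 1), scale N i * N i) ^ n < scale N (n + 1) := by
  have two_le_mul : 2 ≤ scale N n * N n := by nlinarith [two_le_scale hN n, hN n]
  calc 2 * (∏ i ∈ Finset.range (n + 1), scale N i * N i) ^ n
      ≤ (scale N n * N n) * ((scale N n * N n) ^ 2) ^ n := by
        gcongr
        exact prod_scale_mul_le_sq (fun j => two_pos.trans_le (hN j)) n
    _ = (scale N n * N n) ^ (2 * n + 1) := by rw [← pow_mul, pow_succ']
    _ < scale N (n + 1) := Nat.pow_lt_pow_right two_le_mul (by omega)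

theorem exists_sq_scale_le_and_le (hN : ∀ j, 2 ≤ N j) {x : ℝ} (hx : 4 < x) :
    ∃ j, (scale N j : ℝ) ^ 2 ≤ x ∧ x ≤ (scale N (j + 1) : ℝ) ^ 2 := by
  have strictMono : StrictMono fun j => (scale N j : ℝ) ^ 2 := fun i j hij => by
    have := strictMono_scale hN hij
    dsimp only
    gcongr
  have tendsto : Tendsto (fun j => (scale N j : ℝ) ^ 2) atTop atTop :=
    (tendsto_pow_atTop two_ne_zero).comp
      (tendsto_natCast_atTop_atTop.comp (strictMono_scale hN).tendsto_atTop)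
  obtain ⟨j, hj⟩ := strictMono.exists_between_of_tendsto_atTop tendsto
    (x := x) (by norm_num [scale]; linarith)
  exact ⟨j, hj.1.le, hj.2⟩

end Scale

theorem summable_and_tsum_le_of_le_one_div {A y : ℕ → ℝ} (hA₀ : 0 < A 0)
    (hA : ∀ j, 2 * A j ≤ A (j + 1)) (hy₀ : ∀ j, 0 ≤ y j) (hy : ∀ j, y j ≤ 1 / A j) :
    Summable y ∧ ∑' j, y j ≤ 2 / A 0 := by
  have le_geom : ∀ j, y j ≤ 1 / A 0 * (1 / 2) ^ j := fun j => by
    refine (hy j).trans ?_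
    rw [one_div_pow, one_div_mul_one_div_rev]
    gcongr
    exact geom_le zero_le_two j fun k _ => hA k
  have hasSum_geom := hasSum_geometric_two.mul_left (1 / A 0)
  have summable : Summable y := .of_nonneg_of_le hy₀ le_geom hasSum_geom.summable
  refine ⟨summable, (hasSum_le le_geom summable.hasSum hasSum_geom).trans_eq ?_⟩
  ring

theorem exists_int_sum_div_eq {ι : Type*} (s : Finset ι) (a : ι → ℕ) {d : ι → ℕ}
    (hd : ∀ i, d i ≠ 0) :
    ∃ z : ℤ, ∑ i ∈ s, (a i / d i : ℝ) = z / (∏ i ∈ s, d i : ℕ) := by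
  induction s using Finset.cons_induction with
  | empty => exact ⟨0, by simp⟩
  | cons i s hi ih =>
    obtain ⟨z, hz⟩ := ih
    have hdi : (d i : ℝ) ≠ 0 := Nat.cast_ne_zero.2 (hd i)
    have hprod : ((∏ i ∈ s, d i : ℕ) : ℝ) ≠ 0 :=
      Nat.cast_ne_zero.2 (Finset.prod_ne_zero_iff.2 fun i _ => hd i)
    refine ⟨a i * (∏ i ∈ s, d i : ℕ) + d i * z, ?_⟩
    rw [Finset.sum_cons, Finset.prod_cons, hz, div_add_div _ _ hdi hprod]
    push_cast
    rfl

theorem liouville_tsum_div {a d : ℕ → ℕ} (ha : ∀ i, 0 < a i) (hd : ∀ i, 1 < d i)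
    (hs : Summable fun i => (a i / d i : ℝ))
    (tail_lt : ∀ n, ∑' i, (a (i + (n + 1)) / d (i + (n + 1)) : ℝ) <
      1 / ((∏ i ∈ Finset.range (n + 1), d i : ℕ) : ℝ) ^ n) :
    Liouville (∑' i, (a i / d i : ℝ)) := by
  intro n
  have one_lt_prod : 1 < ∏ i ∈ Finset.range (n + 1), d i :=
    (hd n).trans_le <| Nat.le_of_dvd (Finset.prod_pos fun i _ => zero_lt_one.trans (hd i)) <|
      Finset.dvd_prod_of_mem d (Finset.self_mem_range_succ n)
  obtain ⟨z, hz⟩ := exists_int_sum_div_eq (Finset.range (n + 1)) a fun i => (hd i).ne_bot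
  have tail_pos : 0 < ∑' i, (a (i + (n + 1)) / d (i + (n + 1)) : ℝ) :=
    ((summable_nat_add_iff (n + 1)).2 hs).tsum_pos (fun i => by positivity) 0 <|
      div_pos (Nat.cast_pos.2 (ha _)) (Nat.cast_pos.2 (zero_lt_one.trans (hd _)))
  refine ⟨z, (∏ i ∈ Finset.range (n + 1), d i : ℕ), by exact_mod_cast one_lt_prod, ?_, ?_⟩
  · rw [Int.cast_natCast, ← hz, ← hs.sum_add_tsum_nat_add (n + 1)]
    exact (lt_add_of_pos_right _ tail_pos).ne'
  · rw [Int.cast_natCast, ← hz, ← hs.sum_add_tsum_nat_add (n + 1), add_sub_cancel_left,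
      abs_of_pos tail_pos]
    exact tail_lt n

theorem summable_and_tsum_le_of_le_one_div_scale {N : ℕ → ℕ} (hN : ∀ j, 2 ≤ N j) {y : ℕ → ℝ}
    (hy₀ : ∀ j, 0 ≤ y j) (hy : ∀ j, y j ≤ 1 / scale N j) (n : ℕ) :
    Summable (fun j => y (j + n)) ∧ ∑' j, y (j + n) ≤ 2 / scale N n := by
  have scale_pos : (0 : ℝ) < scale N (0 + n) :=
    Nat.cast_pos.2 (two_pos.trans_le (two_le_scale hN (0 + n)))
  have two_mul_le : ∀ j, 2 * (scale N (j + n) : ℝ) ≤ scale N (j + 1 + n) := fun j => by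
    rw [add_right_comm]
    exact_mod_cast two_mul_scale_le_scale_succ hN (j + n)
  simpa only [zero_add] using summable_and_tsum_le_of_le_one_div (A := fun j => scale N (j + n))
    scale_pos two_mul_le (fun j => hy₀ (j + n)) fun j => hy (j + n)

theorem summable_and_liouville_of_div_scale_mul {N : ℕ → ℕ} (hN : ∀ j, 2 ≤ N j) {a q : ℕ → ℕ}
    (ha : ∀ j, 0 < a j) (haq : ∀ j, a j ≤ q j) (hqN : ∀ j, q j ≤ N j) :
    Summable (fun j => (a j / (scale N j * q j : ℕ) : ℝ)) ∧
      Liouville (∑' j, (a j / (scale N j * q j : ℕ) : ℝ)) := by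
  have one_lt_mul : ∀ j, 1 < scale N j * q j := fun j =>
    (two_le_scale hN j).trans (Nat.le_mul_of_pos_right _ ((ha j).trans_le (haq j)))
  have le_one_div : ∀ j, (a j / (scale N j * q j : ℕ) : ℝ) ≤ 1 / scale N j := fun j => by
    have hq : (0 : ℝ) < q j := Nat.cast_pos.2 ((ha j).trans_le (haq j))
    rw [Nat.cast_mul, mul_comm, ← div_div]
    gcongr
    exact (div_le_one hq).2 (by exact_mod_cast haq j)
  have bounds := summable_and_tsum_le_of_le_one_div_scale hN (fun j => by positivity) le_one_div
  refine ⟨(bounds 0).1, liouville_tsum_div ha one_lt_mul (bounds 0).1 fun n => ?_⟩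
  have prod_pos : 0 < ∏ i ∈ Finset.range (n + 1), scale N i * q i :=
    Finset.prod_pos fun i _ => zero_lt_one.trans (one_lt_mul i)
  have prod_lt : 2 * (∏ i ∈ Finset.range (n + 1), scale N i * q i) ^ n < scale N (n + 1) := by
    refine lt_of_le_of_lt ?_ (two_mul_prod_scale_mul_pow_lt hN n)
    gcongr
    exact hqN _
  refine (bounds (n + 1)).2.trans_lt ?_
  rw [div_lt_div_iff₀ (by exact_mod_cast two_pos.trans_le (two_le_scale hN (n + 1)))
    (by positivity), one_mul]
  exact_mod_cast prod_lt

theorem ae_infinitePi_forall {ι : Type*} [Countable ι] {Ω : ι → Type*} [∀ i, MeasurableSpace (Ω i)]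
    {ν : ∀ i, Measure (Ω i)} [∀ i, IsProbabilityMeasure (ν i)] {p : ∀ i, Ω i → Prop}
    (h : ∀ i, ∀ᵐ y ∂ν i, p i y) : ∀ᵐ ω ∂Measure.infinitePi ν, ∀ i, p i (ω i) :=
  ae_all_iff.2 fun i => (measurePreserving_eval_infinitePi ν i).quasiMeasurePreserving.ae (h i)

theorem norm_charFun_map_tsum_le {Ω E : Type*} [MeasurableSpace Ω] {P : Measure Ω}
    [IsProbabilityMeasure P] [NormedAddCommGroup E] [InnerProductSpace ℝ E] [FiniteDimensional ℝ E]
    [MeasurableSpace E] [BorelSpace E] {X : ℕ → Ω → E} (hX : ∀ i, AEMeasurable (X i) P)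
    (indep : iIndepFun X P) (hs : ∀ᵐ ω ∂P, Summable fun i => X i ω) (t : E) (j : ℕ) :
    ‖charFun (P.map fun ω => ∑' i, X i ω) t‖ ≤ ‖charFun (P.map (X j)) t‖ := by
  have tendsto_ae : ∀ᵐ ω ∂P, Tendsto (fun n => ∑ i ∈ Finset.range n, X i ω) atTop
      (𝓝 (∑' i, X i ω)) := hs.mono fun ω hω => hω.hasSum.tendsto_sum_nat
  have aemeasurable_sum : ∀ n, AEMeasurable (fun ω => ∑ i ∈ Finset.range n, X i ω) P := fun n =>
    Finset.aemeasurable_fun_sum _ fun i _ => hX i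
  have aemeasurable_tsum : AEMeasurable (fun ω => ∑' i, X i ω) P :=
    aemeasurable_of_tendsto_metrizable_ae atTop aemeasurable_sum tendsto_ae
  have tendsto_charFun := ProbabilityMeasure.tendsto_iff_tendsto_charFun.1
    (tendstoInDistribution_of_ae_tendsto aemeasurable_sum aemeasurable_tsum tendsto_ae).tendsto t
  refine le_of_tendsto tendsto_charFun.norm ?_
  filter_upwards [eventually_gt_atTop j] with n hn
  have isProb : ∀ i, IsProbabilityMeasure (P.map (X i)) := fun i =>
    Measure.isProbabilityMeasure_map (hX i)
  calc ‖charFun (P.map fun ω => ∑ i ∈ Finset.range n, X i ω) t‖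
      = ∏ i ∈ Finset.range n, ‖charFun (P.map (X i)) t‖ := by
        rw [(indep.restrict _).charFun_map_fun_finsetSum_eq_prod fun i _ => hX i,
          Finset.prod_apply, norm_prod]
    _ = ‖charFun (P.map (X j)) t‖ * ∏ i ∈ (Finset.range n).erase j, ‖charFun (P.map (X i)) t‖ :=
        (Finset.mul_prod_erase _ _ (Finset.mem_range.2 hn)).symm
    _ ≤ ‖charFun (P.map (X j)) t‖ := mul_le_of_le_one_right (norm_nonneg _) <|
        Finset.prod_le_one (fun _ _ => norm_nonneg _) fun _ _ => norm_charFun_le_one t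

/-- The law of the random series `∑' j, ω j` whose terms `ω j` are independent with law `ν j`. As
`∑'` is `0` on divergent series, it is meaningful when the series converges almost surely. -/
noncomputable def seriesLaw (ν : ℕ → Measure ℝ) : Measure ℝ :=
  (Measure.infinitePi ν).map fun ω => ∑' j, ω j

theorem seriesLaw_compl_eq_zero_of_ae_tsum_mem {ν : ℕ → Measure ℝ} {s : Set ℝ}
    (hs : MeasurableSet s) (h : ∀ᵐ ω ∂Measure.infinitePi ν, ∑' j, ω j ∈ s) : seriesLaw ν sᶜ = 0 :=
  (ae_map_iff (Measurable.tsum measurable_pi_apply).aemeasurable hs).2 h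

section SeriesLaw

variable {ν : ℕ → Measure ℝ} [∀ j, IsProbabilityMeasure (ν j)]

instance isProbabilityMeasure_seriesLaw : IsProbabilityMeasure (seriesLaw ν) :=
  Measure.isProbabilityMeasure_map (Measurable.tsum measurable_pi_apply).aemeasurable

theorem norm_fourierT_seriesLaw_le (hs : ∀ᵐ ω ∂Measure.infinitePi ν, Summable ω) (ξ : ℝ) (j : ℕ) :
    ‖fourierT (seriesLaw ν) ξ‖ ≤ ‖fourierT (ν j) ξ‖ := by
  have indep : iIndepFun (fun j (ω : ℕ → ℝ) => ω j) (Measure.infinitePi ν) :=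
    iIndepFun_infinitePi (X := fun _ y => y) fun _ => measurable_id
  have norm_le := norm_charFun_map_tsum_le (fun j => (measurable_pi_apply j).aemeasurable) indep hs
    (-2 * Real.pi * ξ) j
  rwa [Measure.infinitePi_map_eval, ← seriesLaw, ← fourierT_eq_charFun,
    ← fourierT_eq_charFun] at norm_le

end SeriesLaw

theorem ae_summable_and_liouville {N : ℕ → ℕ} (hN : ∀ j, 2 ≤ N j) :
    ∀ᵐ ω ∂Measure.infinitePi fun j => primeFractionLaw (scale N j) (N j),
      Summable ω ∧ Liouville (∑' j, ω j) := by
  have := fun j => isProbabilityMeasure_primeFractionLaw (scale N j) (hN j)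
  filter_upwards [ae_infinitePi_forall fun j => ae_primeFractionLaw (scale N j) (N j)] with ω hω
  choose a q ha haq hqN hω using hω
  obtain rfl : ω = _ := funext hω
  exact summable_and_liouville_of_div_scale_mul hN ha haq hqN

theorem eventually_log_rpow_lt_sqrt (p : ℝ) : ∀ᶠ x in atTop, Real.log x ^ p < √x := by
  filter_upwards [(isLittleO_log_rpow_rpow_atTop p (by norm_num : (0 : ℝ) < 1 / 2)).bound
    (by norm_num : (0 : ℝ) < 1 / 2), eventually_gt_atTop 0] with x hx hx₀
  rw [← Real.sqrt_eq_rpow, Real.norm_of_nonneg (Real.sqrt_nonneg x)] at hx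
  linarith [le_of_abs_le hx, Real.sqrt_pos.2 hx₀]

theorem lt_div_of_lt_sqrt {a k x : ℝ} (ha : 0 < a) (hax : a ^ 2 ≤ x) (hk : k < √x) : k < x / a := by
  rw [lt_div_iff₀ ha]
  calc k * a < √x * a := by gcongr
    _ ≤ √x * √x := by
      gcongr
      exact Real.le_sqrt_of_sq_le hax
    _ = x := Real.mul_self_sqrt ((sq_nonneg a).trans hax)

theorem logb_two_le_three_mul_log {x y : ℝ} (hx : Real.exp 1 ≤ x) (hy : 0 < y) (hyx : y ≤ 2 * x) :
    Real.logb 2 y ≤ 3 * Real.log x := by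
  have x_pos : 0 < x := (Real.exp_pos 1).trans_le hx
  have one_le_log : 1 ≤ Real.log x := (Real.le_log_iff_exp_le x_pos).2 hx
  have log_le : Real.log y ≤ Real.log 2 + Real.log x := by
    rw [← Real.log_mul two_ne_zero x_pos.ne']
    exact Real.log_le_log hy hyx
  rw [Real.logb, div_le_iff₀ (Real.log_pos one_lt_two)]
  nlinarith [Real.log_two_gt_d9]

theorem norm_fourierT_primeFractionLaw_le_log_rpow {p : ℝ} (hp : 0 ≤ p) {A N : ℕ} (hA : 0 < A)
    (hN : 2 ≤ N) {ξ : ℝ} (hξ : Real.exp 1 ≤ |ξ|) (hAξ : (A : ℝ) ^ 2 ≤ |ξ|)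
    (log_lt : Real.log |ξ| ^ p < √|ξ|) (hNξ : Real.log |ξ| ^ (2 * p + 1) ≤ N.primeCounting) :
    ‖fourierT (primeFractionLaw A N) ξ‖ ≤ 10 * Real.log |ξ| ^ (-p) := by
  set L := Real.log |ξ|
  have hA' : (1 : ℝ) ≤ A := by exact_mod_cast hA
  have ξ_pos : 0 < |ξ| := (Real.exp_pos 1).trans_le hξ
  have one_le_L : 1 ≤ L := (Real.le_log_iff_exp_le ξ_pos).2 hξ
  have one_le_K : 1 ≤ L ^ p := Real.one_le_rpow one_le_L hp
  have abs_div_eq : |ξ / A| = |ξ| / A := by rw [abs_div, Nat.abs_cast]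
  have K_lt : L ^ p < |ξ / A| := by
    rw [abs_div_eq]
    exact lt_div_of_lt_sqrt (by linarith) hAξ log_lt
  have logb_nonneg : 0 ≤ Real.logb 2 (|ξ / A| + L ^ p) :=
    Real.logb_nonneg one_lt_two (by linarith)
  have logb_le : Real.logb 2 (|ξ / A| + L ^ p) ≤ 3 * L := by
    refine logb_two_le_three_mul_log hξ (by linarith) ?_
    linarith [abs_div_eq.trans_le (div_le_self ξ_pos.le hA')]
  have rpow_eq : L ^ (2 * p + 1) = L ^ p * L ^ p * L := by
    rw [Real.rpow_add_one (by positivity), two_mul, Real.rpow_add (by positivity)]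
  calc ‖fourierT (primeFractionLaw A N) ξ‖
      ≤ 1 / (2 * L ^ p) + (2 * L ^ p + 1) * Real.logb 2 (|ξ / A| + L ^ p) / N.primeCounting :=
        norm_fourierT_primeFractionLaw_le hN one_le_K K_lt
    _ ≤ 1 / L ^ p + (3 * L ^ p) * (3 * L) / (L ^ p * L ^ p * L) := by
        rw [← rpow_eq]
        gcongr <;> linarith
    _ = 10 * L ^ (-p) := by
        rw [Real.rpow_neg (by positivity)]
        field_simp
        norm_num

theorem stmt17 (p : ℝ) (hp : 0 < p) :
    ∃ μ : Measure ℝ, IsProbabilityMeasure μ ∧ μ {x : ℝ | Liouville x}ᶜ = 0 ∧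
      ∃ C > (0 : ℝ), ∃ M > Real.exp 1,
        ∀ ξ : ℝ, M ≤ |ξ| → ‖fourierT μ ξ‖ ≤ C * (Real.log |ξ|) ^ (-p) := by
  obtain ⟨N, two_le, rpow_le⟩ := exists_log_scale_succ_rpow_le_primeCounting
    (show 0 ≤ 2 * p + 1 by positivity)
  obtain ⟨M, log_lt⟩ := eventually_atTop.1 (eventually_log_rpow_lt_sqrt p)
  have isProb := fun j => isProbabilityMeasure_primeFractionLaw (scale N j) (two_le j)
  have ae_liouville := ae_summable_and_liouville two_le
  refine ⟨seriesLaw fun j => primeFractionLaw (scale N j) (N j), inferInstance,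
    seriesLaw_compl_eq_zero_of_ae_tsum_mem IsGδ.setOfPred_liouville.measurableSet
      (ae_liouville.mono fun _ h => h.2), 10, by norm_num, max M 5,
    lt_max_of_lt_right (by linarith [Real.exp_one_lt_d9]), fun ξ hξ => ?_⟩
  obtain ⟨hM, h5⟩ := max_le_iff.1 hξ
  obtain ⟨j, sq_le, le_sq⟩ := exists_sq_scale_le_and_le two_le (show 4 < |ξ| by linarith)
  have log_le : Real.log |ξ| ≤ 2 * Real.log (scale N (j + 1)) := by
    rw [← Nat.cast_ofNat, ← Real.log_pow]
    exact Real.log_le_log (by linarith) le_sq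
  have rpow_le_primeCounting : Real.log |ξ| ^ (2 * p + 1) ≤ (N j).primeCounting :=
    (Real.rpow_le_rpow (Real.log_nonneg (by linarith)) log_le (by positivity)).trans (rpow_le j)
  exact (norm_fourierT_seriesLaw_le (ae_liouville.mono fun _ h => h.1) ξ j).trans <|
    norm_fourierT_primeFractionLaw_le_log_rpow hp.le (two_pos.trans_le (two_le_scale two_le j))
      (two_le j) (by linarith [Real.exp_one_lt_d9]) sq_le (log_lt _ hM) rpow_le_primeCounting
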